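/- Let k ≥ 1 be a natural number and let c : ℝ → ℝ be c(x) = sin(2πx)^{2k}. Then the map c ↦ ∫₀¹ log|c(x)| dx on 1-periodic functions is discontinuous at c in the C^k topology: there exists a sequence (c_n) of real-analytic 1-periodic functions ℝ → ℝ such that max_{0 ≤ j ≤ k} sup_{x ∈ ℝ} |c_n^{(j)}(x) − c^{(j)}(x)| → 0 as n → ∞, yet ∫₀¹ log|c_n(x)| dx does not converge to ∫₀¹ log|c(x)| dx. -/

import Mathlib

open MeasureTheory Filter
open scoped Real

open Set Topology Polynomial

/-!
Composition with `x ↦ sin (2πx)` reduces the problem to functions on `[-1, 1]`. If `f` is `C^k`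
and all its derivatives of order at most `k` vanish at `0`, then `f` is `C^k`-close to a function
`g` vanishing on a whole neighbourhood `[-δ, δ]` of `0`: subtract from `f^{(k)}` its truncation to
small values and integrate `k` times from `0`. Polynomials are `C^k`-dense, so some nonzero
polynomial `p` is as close to `g` as we like; since `δ` is fixed before `p` is chosen, `|p|` can be
made so small on `[-δ, δ]` that the average of `log |p (sin (2πx))|` is below any prescribed bound.
-/

/-- `f` and `g` are within `ε` of each other on `s` in the `C^k` sense. As `iteratedDeriv` has junk
values, this is only meaningful for `C^k` functions. -/
def CkClose (k : ℕ) (s : Set ℝ) (ε : ℝ) (f g : ℝ → ℝ) : Prop :=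
  ∀ j ≤ k, ∀ x ∈ s, |iteratedDeriv j f x - iteratedDeriv j g x| ≤ ε

namespace CkClose

variable {k : ℕ} {s : Set ℝ} {ε ε' : ℝ} {f g h : ℝ → ℝ}

theorem abs_sub_apply_le (hfg : CkClose k s ε f g) {x : ℝ} (hx : x ∈ s) : |f x - g x| ≤ ε := by
  simpa using hfg 0 k.zero_le x hx

theorem mono (hfg : CkClose k s ε f g) (hε : ε ≤ ε') : CkClose k s ε' f g :=
  fun j hj x hx => (hfg j hj x hx).trans hε

theorem trans (hfg : CkClose k s ε f g) (hgh : CkClose k s ε' g h) :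
    CkClose k s (ε + ε') f h := fun j hj x hx =>
  (abs_sub_le _ _ _).trans (add_le_add (hfg j hj x hx) (hgh j hj x hx))

theorem of_deriv {a b x₀ : ℝ} (hf : Differentiable ℝ f) (hg : Differentiable ℝ g)
    (hx₀ : x₀ ∈ Icc a b) (hfg₀ : f x₀ = g x₀)
    (hfg : CkClose k (Icc a b) ε (deriv f) (deriv g)) :
    CkClose (k + 1) (Icc a b) (max 1 (b - a) * ε) f g := by
  have hε : 0 ≤ ε := (abs_nonneg _).trans (hfg.abs_sub_apply_le hx₀)
  rintro (_ | j) hj x hx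
  · have hmvt : |(f - g) x - (f - g) x₀| ≤ ε * |x - x₀| :=
      (convex_Icc a b).norm_image_sub_le_of_norm_deriv_le
        (fun y _ => (hf y).sub (hg y))
        (fun y hy => by rw [deriv_sub (hf y) (hg y)]; exact hfg.abs_sub_apply_le hy) hx₀ hx
    rw [Pi.sub_apply, Pi.sub_apply, hfg₀, sub_self, sub_zero] at hmvt
    rw [iteratedDeriv_zero, iteratedDeriv_zero, mul_comm]
    refine hmvt.trans (mul_le_mul_of_nonneg_left (le_max_of_le_right ?_) hε)
    exact Real.dist_le_of_mem_Icc hx hx₀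
  · rw [iteratedDeriv_succ', iteratedDeriv_succ']
    exact (hfg j (by omega) x hx).trans (le_mul_of_one_le_left hε (le_max_left _ _))

theorem comp {t : Set ℝ} {u : ℝ → ℝ} {D : ℝ} (hf : ContDiff ℝ k f) (hg : ContDiff ℝ k g)
    (hfg : CkClose k t ε f g) (hu : ContDiff ℝ k u) (hst : MapsTo u s t) (hD : 1 ≤ D)
    (huD : ∀ i, 1 ≤ i → i ≤ k → ∀ x ∈ s, |iteratedDeriv i u x| ≤ D ^ i) :
    CkClose k s (k.factorial * ε * D ^ k) (fun x => f (u x)) (fun x => g (u x)) := by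
  intro j hj x hx
  have hε : 0 ≤ ε := (abs_nonneg _).trans (hfg.abs_sub_apply_le (hst hx))
  have hjk : (j : WithTop ℕ∞) ≤ k := by exact_mod_cast hj
  have hbound : ‖iteratedFDeriv ℝ j ((f - g) ∘ u) x‖ ≤ j.factorial * ε * D ^ j := by
    refine norm_iteratedFDeriv_comp_le (g := f - g) (hf.sub hg) hu hjk x
      (fun i hi => ?_) fun i hi₁ hi => ?_
    · have hik : (i : WithTop ℕ∞) ≤ k := by exact_mod_cast hi.trans hj
      rw [norm_iteratedFDeriv_eq_norm_iteratedDeriv, Real.norm_eq_abs,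
        iteratedDeriv_sub (hf.of_le hik).contDiffAt (hg.of_le hik).contDiffAt]
      exact hfg i (hi.trans hj) _ (hst hx)
    · rw [norm_iteratedFDeriv_eq_norm_iteratedDeriv]
      exact huD i hi₁ (hi.trans hj) x hx
  have hcomp : iteratedDeriv j ((f - g) ∘ u) x =
      iteratedDeriv j (fun x => f (u x)) x - iteratedDeriv j (fun x => g (u x)) x :=
    iteratedDeriv_sub ((hf.comp hu).of_le hjk).contDiffAt ((hg.comp hu).of_le hjk).contDiffAt
  rw [norm_iteratedFDeriv_eq_norm_iteratedDeriv, hcomp] at hbound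
  exact hbound.trans (by gcongr)

end CkClose

theorem exists_continuous_eventuallyEq_zero_abs_sub_le {X : Type*} [TopologicalSpace X]
    {φ : X → ℝ} (hφ : Continuous φ) {x₀ : X} (hφ₀ : φ x₀ = 0) {ε : ℝ} (hε : 0 < ε) :
    ∃ ψ : X → ℝ, Continuous ψ ∧ ψ =ᶠ[𝓝 x₀] 0 ∧ ∀ x, |ψ x - φ x| ≤ ε := by
  refine ⟨fun x => φ x - max (-ε) (min (φ x) ε), by fun_prop, ?_, fun x => ?_⟩
  · have hsmall : ∀ᶠ x in 𝓝 x₀, |φ x| < ε :=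
      hφ.abs.continuousAt.eventually_lt_const (by simpa [hφ₀] using hε)
    filter_upwards [hsmall] with x hx
    obtain ⟨hl, hr⟩ := abs_lt.1 hx
    simp [min_eq_left hr.le, max_eq_right hl.le]
  · rw [sub_sub_cancel_left, abs_neg]
    exact abs_le.2 ⟨le_max_left _ _, max_le (by linarith) (min_le_right _ _)⟩

theorem exists_ckClose_eventuallyEq_zero {k : ℕ} {f : ℝ → ℝ} (hf : ContDiff ℝ k f) {a b x₀ : ℝ}
    (hx₀ : x₀ ∈ Icc a b) (hf₀ : ∀ j ≤ k, iteratedDeriv j f x₀ = 0) {ε : ℝ} (hε : 0 < ε) :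
    ∃ g : ℝ → ℝ, ContDiff ℝ k g ∧ g =ᶠ[𝓝 x₀] 0 ∧ CkClose k (Icc a b) ε g f := by
  induction k generalizing f ε with
  | zero =>
    obtain ⟨g, hg, hg₀, hgf⟩ := exists_continuous_eventuallyEq_zero_abs_sub_le hf.continuous
      (by simpa using hf₀ 0 le_rfl) hε
    refine ⟨g, contDiff_zero.2 hg, hg₀, fun j hj x _ => ?_⟩
    obtain rfl := Nat.le_zero.1 hj
    simpa using hgf x
  | succ k ih =>
    rw [Nat.cast_succ, contDiff_succ_iff_deriv] at hf
    obtain ⟨hfd, -, hf'⟩ := hf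
    have hM : 0 < max 1 (b - a) := zero_lt_one.trans_le (le_max_left _ _)
    obtain ⟨g', hg', hg'₀, hgf'⟩ := ih hf'
      (fun j hj => by simpa [← iteratedDeriv_succ'] using hf₀ (j + 1) (by omega))
      (div_pos hε hM)
    set g : ℝ → ℝ := fun x => ∫ t in x₀..x, g' t
    have hgd : ∀ x, HasDerivAt g (g' x) x := fun x =>
      (hg'.continuous.integral_hasStrictDerivAt x₀ x).hasDerivAt
    have hderiv : deriv g = g' := funext fun x => (hgd x).deriv
    have hgdiff : Differentiable ℝ g := fun x => (hgd x).differentiableAt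
    refine ⟨g, ?_, ?_, ?_⟩
    · rw [Nat.cast_succ, contDiff_succ_iff_deriv]
      exact ⟨hgdiff, by simp, hderiv ▸ hg'⟩
    · obtain ⟨r, hr, hball⟩ := Metric.eventually_nhds_iff_ball.1 hg'₀
      filter_upwards [Metric.ball_mem_nhds x₀ hr] with x hx
      exact intervalIntegral.integral_zero_ae <| .of_forall fun t ht => hball t <|
        (convex_ball x₀ r).ordConnected.uIcc_subset (Metric.mem_ball_self hr) hx
          (uIoc_subset_uIcc ht)
    · rw [← hderiv] at hgf'
      simpa [mul_div_cancel₀ _ hM.ne'] using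
        hgf'.of_deriv hgdiff hfd hx₀ (by simpa [g] using (hf₀ 0 (by omega)).symm)

theorem exists_polynomial_derivative_eq_eval_eq {K : Type*} [Field K] [CharZero K] (q : K[X])
    (x₀ y₀ : K) : ∃ p : K[X], derivative p = q ∧ p.eval x₀ = y₀ := by
  obtain ⟨p, hp⟩ : ∃ p : K[X], derivative p = q := by
    induction q using Polynomial.induction_on' with
    | add q₁ q₂ h₁ h₂ =>
      obtain ⟨p₁, rfl⟩ := h₁
      obtain ⟨p₂, rfl⟩ := h₂
      exact ⟨p₁ + p₂, derivative_add⟩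
    | monomial n c =>
      refine ⟨monomial (n + 1) (c / (n + 1)), ?_⟩
      rw [derivative_monomial, Nat.cast_succ, div_mul_cancel₀ _ n.cast_add_one_ne_zero,
        Nat.add_sub_cancel]
  exact ⟨p + C (y₀ - p.eval x₀), by simp [hp], by simp⟩

theorem exists_polynomial_ne_zero_abs_sub_le {f : ℝ → ℝ} {a b : ℝ} (hf : ContinuousOn f (Icc a b))
    {ε : ℝ} (hε : 0 < ε) : ∃ p : ℝ[X], p ≠ 0 ∧ ∀ x ∈ Icc a b, |p.eval x - f x| ≤ ε := by
  obtain ⟨p, hp⟩ := exists_polynomial_near_of_continuousOn a b f hf (ε / 2) (half_pos hε)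
  rcases eq_or_ne p 0 with rfl | hp₀
  · refine ⟨C (ε / 2), C_ne_zero.2 (half_pos hε).ne', fun x hx => ?_⟩
    have h := abs_lt.1 (hp x hx)
    rw [eval_zero] at h
    rw [eval_C]
    exact abs_le.2 ⟨by linarith, by linarith⟩
  · exact ⟨p, hp₀, fun x hx => (hp x hx).le.trans (half_le_self hε.le)⟩

theorem exists_polynomial_ne_zero_ckClose {k : ℕ} {f : ℝ → ℝ} (hf : ContDiff ℝ k f) {a b : ℝ}
    (hab : a ≤ b) {ε : ℝ} (hε : 0 < ε) :
    ∃ p : ℝ[X], p ≠ 0 ∧ CkClose k (Icc a b) ε (fun x => p.eval x) f := by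
  induction k generalizing f ε with
  | zero =>
    obtain ⟨p, hp, hpf⟩ := exists_polynomial_ne_zero_abs_sub_le hf.continuous.continuousOn hε
    refine ⟨p, hp, fun j hj x hx => ?_⟩
    obtain rfl := Nat.le_zero.1 hj
    simpa using hpf x hx
  | succ k ih =>
    rw [Nat.cast_succ, contDiff_succ_iff_deriv] at hf
    obtain ⟨hfd, -, hf'⟩ := hf
    have hM : 0 < max 1 (b - a) := zero_lt_one.trans_le (le_max_left _ _)
    obtain ⟨q, hq, hqf⟩ := ih hf' (div_pos hε hM)
    obtain ⟨p, rfl, hpa⟩ := exists_polynomial_derivative_eq_eval_eq q a (f a)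
    have hderiv : deriv (fun x => p.eval x) = fun x => (derivative p).eval x :=
      funext fun x => p.deriv
    rw [← hderiv] at hqf
    refine ⟨p, by rintro rfl; exact hq derivative_zero, ?_⟩
    simpa [mul_div_cancel₀ _ hM.ne'] using
      hqf.of_deriv p.differentiable hfd (left_mem_Icc.2 hab) hpa

theorem exists_polynomial_ckClose_abs_le_of_flat {k : ℕ} {f : ℝ → ℝ} (hf : ContDiff ℝ k f)
    {a b x₀ : ℝ} (hx₀ : x₀ ∈ Ioo a b) (hf₀ : ∀ j ≤ k, iteratedDeriv j f x₀ = 0)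
    {η : ℝ} (hη : 0 < η) :
    ∃ δ > 0, ∀ ε > 0, ∃ p : ℝ[X], p ≠ 0 ∧ CkClose k (Icc a b) η (fun x => p.eval x) f ∧
      ∀ x, |x - x₀| ≤ δ → |p.eval x| ≤ ε := by
  obtain ⟨g, hg, hg₀, hgf⟩ :=
    exists_ckClose_eventuallyEq_zero hf (Ioo_subset_Icc_self hx₀) hf₀ (half_pos hη)
  obtain ⟨δ, hδ, hball⟩ :=
    Metric.nhds_basis_closedBall.eventually_iff.1 (hg₀.and (Icc_mem_nhds hx₀.1 hx₀.2))
  refine ⟨δ, hδ, fun ε hε => ?_⟩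
  obtain ⟨p, hp, hpg⟩ :=
    exists_polynomial_ne_zero_ckClose hg (hx₀.1.trans hx₀.2).le (lt_min (half_pos hη) hε)
  refine ⟨p, hp, (hpg.trans hgf).mono ?_, fun x hx => ?_⟩
  · linarith [min_le_left (η / 2) ε]
  · obtain ⟨hgx, hxab⟩ := hball hx
    simpa [hgx] using (hpg.abs_sub_apply_le hxab).trans (min_le_right _ _)

theorem ae_ne_zero_of_analyticOnNhd {μ : Measure ℝ} [NullSingletonClass μ] {f : ℝ → ℝ}
    (hf : AnalyticOnNhd ℝ f univ) {x₀ : ℝ} (hx₀ : f x₀ ≠ 0) : ∀ᵐ x ∂μ, f x ≠ 0 := by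
  have h := ae_restrict_le_codiscreteWithin (μ := μ) MeasurableSet.univ
    (hf.preimage_zero_mem_codiscrete hx₀)
  rwa [Measure.restrict_univ] at h

theorem integral_log_abs_le {f : ℝ → ℝ} {a b A : ℝ} (hab : a ≤ b)
    (hint : IntervalIntegrable (fun x => Real.log |f x|) volume a b) (hf : ∀ᵐ x, f x ≠ 0)
    (hA : ∀ x ∈ Icc a b, |f x| ≤ A) : ∫ x in a..b, Real.log |f x| ≤ (b - a) * Real.log A := by
  rw [← smul_eq_mul, ← intervalIntegral.integral_const]
  refine intervalIntegral.integral_mono_ae_restrict hab hint (by simp) ?_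
  filter_upwards [ae_restrict_of_ae hf, ae_restrict_mem measurableSet_Icc] with x hx hxab
  exact Real.log_le_log (abs_pos.2 hx) (hA x hxab)

theorem analyticOnNhd_eval_sin (p : ℝ[X]) (ω : ℝ) :
    AnalyticOnNhd ℝ (fun x => p.eval (Real.sin (ω * x))) univ :=
  (AnalyticOnNhd.eval_polynomial p).comp (f := fun x => Real.sin (ω * x))
    (fun x _ => by fun_prop) (mapsTo_univ _ _)

theorem ae_eval_sin_ne_zero {p : ℝ[X]} (hp : p ≠ 0) {ω : ℝ} (hω : ω ≠ 0) :
    ∀ᵐ x, p.eval (Real.sin (ω * x)) ≠ 0 := by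
  obtain ⟨y, hy, hpy⟩ : ∃ y ∈ Icc (-1 : ℝ) 1, p.eval y ≠ 0 := by
    by_contra! h
    exact hp (eq_zero_of_infinite_isRoot p ((Icc_infinite (by norm_num)).mono h))
  refine ae_ne_zero_of_analyticOnNhd (analyticOnNhd_eval_sin p ω) (x₀ := Real.arcsin y / ω) ?_
  rwa [mul_div_cancel₀ _ hω, Real.sin_arcsin hy.1 hy.2]

theorem integral_log_abs_eval_sin_le {p : ℝ[X]} (hp : p ≠ 0) {δ A B : ℝ} (hδ₀ : 0 ≤ δ)
    (hδ : δ ≤ 2 * π) (hA : ∀ y, |y| ≤ δ → |p.eval y| ≤ A)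
    (hB : ∀ y ∈ Icc (-1) 1, |p.eval y| ≤ B) :
    ∫ x in (0 : ℝ)..1, Real.log |p.eval (Real.sin (2 * π * x))| ≤
      δ / (2 * π) * Real.log A + (1 - δ / (2 * π)) * Real.log B := by
  have hint (a b : ℝ) :
      IntervalIntegrable (fun x => Real.log |p.eval (Real.sin (2 * π * x))|) volume a b :=
    MeromorphicOn.intervalIntegrable_log_norm fun x _ =>
      (analyticOnNhd_eval_sin p (2 * π) x (mem_univ x)).meromorphicAt
  have hne := ae_eval_sin_ne_zero hp Real.two_pi_pos.ne'
  rw [← intervalIntegral.integral_add_adjacent_intervals (hint 0 (δ / (2 * π))) (hint _ 1)]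
  refine add_le_add ?_ ?_
  · refine (integral_log_abs_le (by positivity) (hint _ _) hne fun x hx => hA _ ?_).trans_eq
      (by rw [sub_zero])
    calc |Real.sin (2 * π * x)| ≤ |2 * π * x| := Real.abs_sin_le_abs
      _ = x * (2 * π) := by rw [abs_of_nonneg (mul_nonneg Real.two_pi_pos.le hx.1), mul_comm]
      _ ≤ δ := (le_div_iff₀ Real.two_pi_pos).1 hx.2
  · exact integral_log_abs_le ((div_le_one Real.two_pi_pos).2 hδ) (hint _ _) hne
      fun x _ => hB _ (Real.sin_mem_Icc _)

theorem abs_iteratedDeriv_sin_const_mul_le (ω : ℝ) (n : ℕ) (x : ℝ) :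
    |iteratedDeriv n (fun x => Real.sin (ω * x)) x| ≤ |ω| ^ n := by
  rw [iteratedDeriv_comp_const_mul Real.contDiff_sin, abs_mul, abs_pow]
  exact mul_le_of_le_one_right (by positivity) (Real.abs_iteratedDeriv_sin_le_one n _)

theorem exists_polynomial_integral_log_abs_eval_sin_le {k : ℕ} {f : ℝ → ℝ} (hf : ContDiff ℝ k f)
    (hf₀ : ∀ j ≤ k, iteratedDeriv j f 0 = 0) {η : ℝ} (hη : 0 < η) (M : ℝ) :
    ∃ p : ℝ[X], CkClose k (Icc (-1) 1) η (fun y => p.eval y) f ∧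
      ∫ x in (0 : ℝ)..1, Real.log |p.eval (Real.sin (2 * π * x))| ≤ M := by
  obtain ⟨δ₀, hδ₀, hflat⟩ := exists_polynomial_ckClose_abs_le_of_flat hf
    (a := -1) (b := 1) (by norm_num) hf₀ hη
  obtain ⟨B, hB⟩ := (isCompact_Icc (a := (-1 : ℝ)) (b := 1)).exists_bound_of_continuousOn
    hf.continuous.continuousOn
  set δ := min δ₀ (2 * π)
  set θ := δ / (2 * π)
  have hδ : 0 < δ := lt_min hδ₀ Real.two_pi_pos
  have hθ : 0 < θ := div_pos hδ Real.two_pi_pos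
  -- `ε` solves `θ * log ε + (1 - θ) * log (B + η) = M`.
  set ε := Real.exp ((M - (1 - θ) * Real.log (B + η)) / θ)
  obtain ⟨p, hp, hpf, hpε⟩ := hflat ε (Real.exp_pos _)
  refine ⟨p, hpf, ?_⟩
  have hpB : ∀ y ∈ Icc (-1) 1, |p.eval y| ≤ B + η := fun y hy => by
    have h₁ := hB y hy
    have h₂ := hpf.abs_sub_apply_le hy
    have h₃ := abs_sub_abs_le_abs_sub (p.eval y) (f y)
    rw [Real.norm_eq_abs] at h₁
    linarith
  calc ∫ x in (0 : ℝ)..1, Real.log |p.eval (Real.sin (2 * π * x))|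
      ≤ θ * Real.log ε + (1 - θ) * Real.log (B + η) :=
        integral_log_abs_eval_sin_le hp hδ.le (min_le_right _ _)
          (fun y hy => hpε y (by simpa using hy.trans (min_le_left _ _))) hpB
    _ = M := by rw [Real.log_exp, mul_div_cancel₀ _ hθ.ne', sub_add_cancel]

theorem exists_analytic_periodic_ckClose_integral_log_abs_le {k : ℕ} {f : ℝ → ℝ}
    (hf : ContDiff ℝ k f) (hf₀ : ∀ j ≤ k, iteratedDeriv j f 0 = 0) {η : ℝ} (hη : 0 < η) (M : ℝ) :
    ∃ c : ℝ → ℝ, (∀ x, AnalyticAt ℝ c x) ∧ Function.Periodic c 1 ∧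
      CkClose k univ η c (fun x => f (Real.sin (2 * π * x))) ∧
      ∫ x in (0 : ℝ)..1, Real.log |c x| ≤ M := by
  have hC : 0 < k.factorial * |2 * π| ^ k := by positivity
  obtain ⟨p, hpf, hpM⟩ :=
    exists_polynomial_integral_log_abs_eval_sin_le hf hf₀ (div_pos hη hC) M
  refine ⟨fun x => p.eval (Real.sin (2 * π * x)),
    fun x => analyticOnNhd_eval_sin p (2 * π) x (mem_univ x),
    fun x => by simp only [mul_add, mul_one, Real.sin_add_two_pi], ?_, hpM⟩
  have hpi : 1 ≤ |2 * π| := by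
    rw [abs_of_pos Real.two_pi_pos]
    linarith [Real.pi_gt_three]
  have hp : ContDiff ℝ k fun y => p.eval y := by simpa using p.contDiff_aeval (𝕜 := ℝ) k
  refine (hpf.comp hp hf (by fun_prop) (fun x _ => Real.sin_mem_Icc _) hpi
    fun i _ _ x _ => abs_iteratedDeriv_sin_const_mul_le (2 * π) i x).mono (le_of_eq ?_)
  field_simp

theorem logIntegral_discontinuous_Ck_general {k : ℕ} {f : ℝ → ℝ} (hf : ContDiff ℝ k f)
    (hf₀ : ∀ j ≤ k, iteratedDeriv j f 0 = 0) :
    ∃ cn : ℕ → ℝ → ℝ,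
      (∀ n, ∀ x : ℝ, AnalyticAt ℝ (cn n) x) ∧
      (∀ n, Function.Periodic (cn n) 1) ∧
      (∀ j ≤ k, TendstoUniformly (fun n => iteratedDeriv j (cn n))
        (iteratedDeriv j (fun x : ℝ => f (Real.sin (2 * π * x)))) atTop) ∧
      Tendsto (fun n => ∫ x in (0 : ℝ)..1, Real.log |cn n x|) atTop atBot := by
  choose cn han hper hclose hint using fun n : ℕ =>
    exists_analytic_periodic_ckClose_integral_log_abs_le hf hf₀ (Nat.one_div_pos_of_nat (n := n))
      (-n : ℝ)
  refine ⟨cn, han, hper, fun j hj => Metric.tendstoUniformly_iff.2 fun ε hε => ?_,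
    tendsto_atBot_mono hint (tendsto_neg_atTop_atBot.comp tendsto_natCast_atTop_atTop)⟩
  filter_upwards [tendsto_one_div_add_atTop_nhds_zero_nat.eventually_lt_const hε] with n hn x
  rw [dist_comm]
  exact (hclose n j hj x (mem_univ x)).trans_lt hn

theorem iteratedDeriv_pow_zero_of_lt {𝕜 : Type*} [NontriviallyNormedField 𝕜] {j m : ℕ}
    (hjm : j < m) : iteratedDeriv j (fun x : 𝕜 => x ^ m) 0 = 0 := by
  have : m - j ≠ 0 := by omega
  simp [iteratedDeriv_pow, this]

/-- For `k ≥ 1` and `c(x) = sin(2πx)^{2k}`, the map `c ↦ ∫₀¹ log|c| dx` is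
discontinuous at `c` in the `C^k` topology: there is a sequence of real-analytic 1-periodic
functions converging to `c` in `C^k` whose log-integrals do not converge to that of `c`. -/
theorem logIntegral_discontinuous_Ck (k : ℕ) (hk : 1 ≤ k) :
    ∃ cn : ℕ → ℝ → ℝ,
      (∀ n, ∀ x : ℝ, AnalyticAt ℝ (cn n) x) ∧
      (∀ n, Function.Periodic (cn n) 1) ∧
      (∀ j ≤ k, TendstoUniformly (fun n => iteratedDeriv j (cn n))
        (iteratedDeriv j (fun x : ℝ => Real.sin (2 * π * x) ^ (2 * k))) atTop) ∧
      ¬ Tendsto (fun n => ∫ x in (0:ℝ)..1, Real.log |cn n x|) atTop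
        (nhds (∫ x in (0:ℝ)..1, Real.log |Real.sin (2 * π * x) ^ (2 * k)|)) := by
  obtain ⟨cn, han, hper, hCk, hbot⟩ := logIntegral_discontinuous_Ck_general
    (k := k) (f := fun y => y ^ (2 * k)) (by fun_prop)
    fun j hj => iteratedDeriv_pow_zero_of_lt (by omega)
  exact ⟨cn, han, hper, hCk, not_tendsto_nhds_of_tendsto_atBot hbot _⟩
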